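/- arXiv:1403.1335 — 3 statements merged into one kernel-verified Lean document; each statement's English description precedes it below -/
import Mathlib

section
/- (Example, 3-prototile simplest form) Let B = 2 act on ℝ, and set K_1' = [−3/4, −1/2], K_2' = [−1/2, 0], K_3' = [0, 1/4], K = [−3/4, 1/4]. Then 2K_1' = K_2' − 1, 2K_2' = K_1' ∪ K_2' ∪ (K_3' − 1), 2K_3' = (K_1' + 1) ∪ K_3'; the collection {K_1', K_2', K_3'} is an integral self-affine collection associated with B = 2; each digit set D_1' = {0,1}, D_2' = D_3' = {−1,0} is a complete set of coset representatives of ℤ/2ℤ; and K = K_1' ∪ K_2' ∪ K_3' is an integral self-affine ℤ-tiling set with 3 prototiles. -/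
open MeasureTheory Pointwise

namespace ISAMT1

/-- Translation of a subset of `ℝ` by an integer. -/
def tr (c : ℤ) (E : Set ℝ) : Set ℝ := (fun x => (c : ℝ) + x) '' E

/-- An integral self-affine collection in dimension one, associated with an integer `B`
(`|B| > 1`), with digit sets `Γ i j ⊆ ℤ`.  Equality of measurable sets is understood modulo
Lebesgue-null sets, so the self-affine set equation is stated almost everywhere and the
disjointness condition states that intersections are null. -/
structure IsSelfAffineCollection (B : ℤ) {M : ℕ} (K : Fin M → Set ℝ)
    (Γ : Fin M → Fin M → Finset ℤ) : Prop where
  compact : ∀ i, IsCompact (K i)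
  selfaffine : ∀ i, (fun x => (B : ℝ) * x) '' K i =ᵐ[volume] ⋃ j, ⋃ γ ∈ Γ i j, tr γ (K j)
  disj : ∀ k i j : Fin M, ∀ β ∈ Γ k i, ∀ γ ∈ Γ k j, (i ≠ j ∨ β ≠ γ) →
    volume (tr β (K i) ∩ tr γ (K j)) = 0

/-- The collection `K` ℤ-tiles `ℝ`: its members are pairwise essentially disjoint, and the
ℤ-translates of their union are pairwise essentially disjoint and cover `ℝ` up to a null set. -/
def TilesZ {M : ℕ} (K : Fin M → Set ℝ) : Prop :=
  (∀ i j : Fin M, i ≠ j → volume (K i ∩ K j) = 0) ∧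
  (∀ ℓ₁ ℓ₂ : ℤ, ℓ₁ ≠ ℓ₂ → volume (tr ℓ₁ (⋃ i, K i) ∩ tr ℓ₂ (⋃ i, K i)) = 0) ∧
  volume ((Set.univ : Set ℝ) \ ⋃ ℓ : ℤ, tr ℓ (⋃ i, K i)) = 0

/-- `D` is a complete set of coset representatives of `ℤ/Bℤ`. -/
def CompleteResidues (B : ℤ) (D : Finset ℤ) : Prop :=
  ∀ v : ℤ, ∃! d, d ∈ D ∧ ∃ z : ℤ, v = d + B * z

theorem tr_Icc (c : ℤ) (a b : ℝ) : tr c (Set.Icc a b) = Set.Icc ((c : ℝ) + a) (c + b) := by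
  unfold tr
  exact Set.image_const_add_Icc _ _ _

theorem two_Icc (a b : ℝ) :
    (fun x => (2 : ℝ) * x) '' Set.Icc a b = Set.Icc (2 * a) (2 * b) := by
  ext x
  simp only [Set.mem_image, Set.mem_Icc]
  constructor
  · rintro ⟨y, ⟨h1, h2⟩, rfl⟩
    constructor <;> linarith
  · rintro ⟨h1, h2⟩
    exact ⟨x / 2, ⟨by linarith, by linarith⟩, by ring⟩

theorem null_inter (a b c d : ℝ) (h : b ≤ c ∨ d ≤ a) :
    volume (Set.Icc a b ∩ Set.Icc c d) = 0 := by
  rw [Set.Icc_inter_Icc, Real.volume_Icc, ENNReal.ofReal_eq_zero, sub_nonpos]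
  rcases h with h | h
  · exact (min_le_left _ _).trans (h.trans (le_max_right _ _))
  · exact (min_le_right _ _).trans (h.trans (le_max_left _ _))

theorem residues (D : Finset ℤ) (h : D = {0, 1} ∨ D = {-1, 0}) : CompleteResidues 2 D := by
  intro v
  rcases h with rfl | rfl
  · refine ⟨v % 2, ⟨?_, v / 2, by omega⟩, ?_⟩
    · simp only [Finset.mem_insert, Finset.mem_singleton]; omega
    · rintro d ⟨hd, z, hz⟩
      simp only [Finset.mem_insert, Finset.mem_singleton] at hd
      omega
  · refine ⟨-(v % 2), ⟨?_, v / 2 + v % 2, by omega⟩, ?_⟩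
    · simp only [Finset.mem_insert, Finset.mem_singleton]; omega
    · rintro d ⟨hd, z, hz⟩
      simp only [Finset.mem_insert, Finset.mem_singleton] at hd
      omega

/-- the set `K = [−3/4, 1/4]` with `B = 2` and the three prototiles
`K₁' = [−3/4,−1/2]`, `K₂' = [−1/2,0]`, `K₃' = [0,1/4]` is an integral self-affine ℤ-tiling
set with 3 prototiles, with the indicated dilation identities and digit sets
`D₁' = {0,1}`, `D₂' = D₃' = {−1,0}`, each a complete set of coset representatives of `ℤ/2ℤ`. -/
theorem example_three_prototiles
    (K₁ K₂ K₃ : Set ℝ)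
    (hK₁ : K₁ = Set.Icc (-(3 / 4) : ℝ) (-(1 / 2)))
    (hK₂ : K₂ = Set.Icc (-(1 / 2) : ℝ) 0)
    (hK₃ : K₃ = Set.Icc (0 : ℝ) (1 / 4))
    (Γ : Fin 3 → Fin 3 → Finset ℤ)
    (hΓ : Γ = ![![(∅ : Finset ℤ), {-1}, ∅],
                ![{0}, {0}, {-1}],
                ![{1}, ∅, {0}]]) :
    (fun x => (2 : ℝ) * x) '' K₁ = tr (-1) K₂ ∧
    (fun x => (2 : ℝ) * x) '' K₂ = K₁ ∪ K₂ ∪ tr (-1) K₃ ∧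
    (fun x => (2 : ℝ) * x) '' K₃ = tr 1 K₁ ∪ K₃ ∧
    IsSelfAffineCollection 2 ![K₁, K₂, K₃] Γ ∧
    (Finset.univ.biUnion fun i => Γ i 0) = ({0, 1} : Finset ℤ) ∧
    (Finset.univ.biUnion fun i => Γ i 1) = ({-1, 0} : Finset ℤ) ∧
    (Finset.univ.biUnion fun i => Γ i 2) = ({-1, 0} : Finset ℤ) ∧
    (∀ j : Fin 3, CompleteResidues 2 (Finset.univ.biUnion fun i => Γ i j)) ∧
    TilesZ ![K₁, K₂, K₃] ∧
    (⋃ i, (![K₁, K₂, K₃] : Fin 3 → Set ℝ) i) = Set.Icc (-(3 / 4) : ℝ) (1 / 4) := by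
  have h1 : (fun x => (2 : ℝ) * x) '' K₁ = tr (-1) K₂ := by
    rw [hK₁, hK₂, two_Icc, tr_Icc]; norm_num
  have h2 : (fun x => (2 : ℝ) * x) '' K₂ = K₁ ∪ K₂ ∪ tr (-1) K₃ := by
    rw [hK₁, hK₂, hK₃, two_Icc, tr_Icc, Set.Icc_union_Icc_eq_Icc (by norm_num) (by norm_num),
      Set.union_comm, Set.Icc_union_Icc' (by norm_num) (by norm_num)]
    norm_num
  have h3 : (fun x => (2 : ℝ) * x) '' K₃ = tr 1 K₁ ∪ K₃ := by
    rw [hK₁, hK₃, two_Icc, tr_Icc, Set.union_comm,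
      Set.Icc_union_Icc' (by norm_num) (by norm_num)]
    norm_num
  have hU : (⋃ i, (![K₁, K₂, K₃] : Fin 3 → Set ℝ) i) = Set.Icc (-(3 / 4) : ℝ) (1 / 4) := by
    have : (⋃ i, (![K₁, K₂, K₃] : Fin 3 → Set ℝ) i) = K₁ ∪ K₂ ∪ K₃ := by
      ext x
      simp [Fin.exists_fin_succ, or_assoc]
    rw [this, hK₁, hK₂, hK₃, Set.Icc_union_Icc_eq_Icc (by norm_num) (by norm_num),
      Set.Icc_union_Icc_eq_Icc (by norm_num) (by norm_num)]
  have d0 : (Finset.univ.biUnion fun i => Γ i 0) = ({0, 1} : Finset ℤ) := by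
    subst hΓ; decide
  have d1 : (Finset.univ.biUnion fun i => Γ i 1) = ({-1, 0} : Finset ℤ) := by
    subst hΓ; decide
  have d2 : (Finset.univ.biUnion fun i => Γ i 2) = ({-1, 0} : Finset ℤ) := by
    subst hΓ; decide
  have tr0 : ∀ E : Set ℝ, tr 0 E = E := by intro E; simp [tr]
  refine ⟨h1, h2, h3, ⟨?_, ?_, ?_⟩, d0, d1, d2, ?_, ⟨?_, ?_, ?_⟩, hU⟩
  · intro i
    fin_cases i
    · simpa [hK₁] using isCompact_Icc
    · simpa [hK₂] using isCompact_Icc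
    · simpa [hK₃] using isCompact_Icc
  · intro i
    apply Filter.EventuallyEq.of_eq
    subst hΓ
    fin_cases i
    · refine Eq.trans (by simp; rfl) (h1.trans ?_)
      ext x
      simp [Fin.exists_fin_succ]
    · refine Eq.trans (by simp; rfl) (h2.trans ?_)
      ext x
      simp [Fin.exists_fin_succ, tr0, or_assoc]
    · refine Eq.trans (by simp; rfl) (h3.trans ?_)
      ext x
      simp [Fin.exists_fin_succ, tr0]
  · intro k i j β hβ γ hγ hne
    subst hΓ hK₁ hK₂ hK₃
    fin_cases k <;> fin_cases i <;> fin_cases j <;> simp at hβ hγ hne <;> subst hβ hγ <;>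
      first
      | (exact absurd rfl hne)
      | (simp only [tr_Icc, Fin.zero_eta, Fin.mk_one, Fin.reduceFinMk, Matrix.cons_val]
         apply null_inter
         norm_num)
  · intro j
    apply residues
    fin_cases j
    · exact Or.inl d0
    · exact Or.inr d1
    · exact Or.inr d2
  · intro i j hij
    subst hK₁ hK₂ hK₃
    fin_cases i <;> fin_cases j <;>
      first
      | (exact absurd rfl hij)
      | (simp only [Fin.zero_eta, Fin.mk_one, Fin.reduceFinMk, Matrix.cons_val]
         apply null_inter
         norm_num)
  · intro a b hab
    rw [hU, tr_Icc, tr_Icc]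
    apply null_inter
    rcases lt_or_gt_of_ne hab with h | h
    · left
      have : (a : ℝ) + 1 ≤ b := by exact_mod_cast h
      linarith
    · right
      have : (b : ℝ) + 1 ≤ a := by exact_mod_cast h
      linarith
  · rw [hU]
    have : (⋃ ℓ : ℤ, tr ℓ (Set.Icc (-(3 / 4) : ℝ) (1 / 4))) = Set.univ := by
      apply Set.eq_univ_of_forall
      intro x
      rw [Set.mem_iUnion]
      refine ⟨⌊x + 3 / 4⌋, ?_⟩
      rw [tr_Icc]
      have h1 := Int.floor_le (x + 3 / 4)
      have h2 := Int.lt_floor_add_one (x + 3 / 4)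
      constructor <;> linarith
    rw [this]
    simp

end ISAMT1
end

section
/- (Final example, rational case) Let p, q ∈ ℕ with 0 < p < q and gcd(p,q) = 1, set a = p/q, K = [−a, 1−a] ⊆ ℝ, and for i = 1,…,q let K_i = [−(p−i+1)/q, −(p−i)/q]. Then K = ⋃_{i=1}^q K_i with the K_i essentially disjoint, for each i there exist ℓ_1, ℓ_2 ∈ ℤ and j_1, j_2 ∈ {1,…,q} with 2·K_i = (K_{j_1} + ℓ_1) ∪ (K_{j_2} + ℓ_2), the collection {K_i}_{i=1}^q is an integral self-affine collection associated with B = 2, and K is an integral self-affine ℤ-tiling set with q prototiles. -/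
open MeasureTheory Pointwise

namespace ISAMT1

/-- The grid interval with integer index `m`. -/
def gridI (p q : ℕ) (m : ℤ) : Set ℝ :=
  Set.Icc (((m : ℝ) - p) / q) (((m : ℝ) + 1 - p) / q)

lemma mem_gridI {p q : ℕ} (hq : 0 < q) (m : ℤ) (x : ℝ) :
    x ∈ gridI p q m ↔ (m : ℝ) ≤ x * q + p ∧ x * q + p ≤ m + 1 := by
  have hq' : (0 : ℝ) < q := by exact_mod_cast hq
  unfold gridI
  rw [Set.mem_Icc, div_le_iff₀ hq', le_div_iff₀ hq']
  constructor <;> rintro ⟨h1, h2⟩ <;> constructor <;> linarith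

lemma tr_gridI {p q : ℕ} (hq : 0 < q) (c m : ℤ) :
    tr c (gridI p q m) = gridI p q (m + c * q) := by
  ext x
  unfold tr
  rw [mem_gridI hq]
  constructor
  · rintro ⟨y, hy, rfl⟩
    rw [mem_gridI hq] at hy
    push_cast
    constructor <;> nlinarith [hy.1, hy.2]
  · rintro ⟨h1, h2⟩
    push_cast at h1 h2
    refine ⟨x - c, ?_, by simp⟩
    rw [mem_gridI hq]
    constructor <;> nlinarith

lemma null_of_lt {p q : ℕ} (hq : 0 < q) (m n : ℤ) (h : m < n) :
    volume (gridI p q m ∩ gridI p q n) = 0 := by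
  have hq' : (0 : ℝ) < q := by exact_mod_cast hq
  have hs : gridI p q m ∩ gridI p q n ⊆ {((n : ℝ) - p) / q} := by
    rintro x ⟨h1, h2⟩
    rw [mem_gridI hq] at h1 h2
    have h3 : (m : ℝ) + 1 ≤ n := by exact_mod_cast h
    rw [Set.mem_singleton_iff, eq_div_iff hq'.ne']
    linarith [h1.2, h2.1]
  exact measure_mono_null hs (by simp)

lemma null_of_ne {p q : ℕ} (hq : 0 < q) (m n : ℤ) (h : m ≠ n) :
    volume (gridI p q m ∩ gridI p q n) = 0 := by
  rcases lt_or_gt_of_ne h with h | h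
  · exact null_of_lt hq m n h
  · rw [Set.inter_comm]
    exact null_of_lt hq n m h

lemma double_gridI {p q : ℕ} (hq : 0 < q) (m : ℤ) :
    (fun x => (2 : ℝ) * x) '' gridI p q m =
      gridI p q (2 * m - p) ∪ gridI p q (2 * m - p + 1) := by
  ext x
  rw [Set.mem_union, mem_gridI hq, mem_gridI hq]
  push_cast
  constructor
  · rintro ⟨y, hy, rfl⟩
    rw [mem_gridI hq] at hy
    obtain ⟨h1, h2⟩ := hy
    dsimp only
    rcases le_total (2 * y * q + p) (2 * m - p + 1 : ℝ) with h | h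
    · left; constructor <;> linarith
    · right; constructor <;> linarith
  · intro h
    refine ⟨x / 2, ?_, by dsimp only; ring⟩
    rw [mem_gridI hq]
    rcases h with ⟨h1, h2⟩ | ⟨h1, h2⟩ <;> constructor <;> linarith

/-- Uniqueness of division with remainder. -/
lemma idx_ne {q : ℕ} (i j : Fin q) (β γ : ℤ) (h : i ≠ j ∨ β ≠ γ) :
    ((i : ℕ) : ℤ) + β * q ≠ ((j : ℕ) : ℤ) + γ * q := by
  intro he
  have hi : ((i : ℕ) : ℤ) < q := by exact_mod_cast i.2
  have hj : ((j : ℕ) : ℤ) < q := by exact_mod_cast j.2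
  have hq : (0 : ℤ) < q := by omega
  have hb : β = γ := by
    have e1 : (((i : ℕ) : ℤ) + β * q) / q = β := by
      rw [Int.add_mul_ediv_right _ _ hq.ne', Int.ediv_eq_zero_of_lt (by omega) hi, zero_add]
    have e2 : (((j : ℕ) : ℤ) + γ * q) / q = γ := by
      rw [Int.add_mul_ediv_right _ _ hq.ne', Int.ediv_eq_zero_of_lt (by omega) hj, zero_add]
    rw [← e1, ← e2, he]
  subst hb
  rcases h with h | h
  · apply h
    ext
    omega
  · exact h rfl

lemma idx_exists {q : ℕ} (hq : 0 < q) (n : ℤ) :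
    ∃ (j : Fin q) (c : ℤ), ((j : ℕ) : ℤ) + c * q = n := by
  have hq' : (0 : ℤ) < q := by exact_mod_cast hq
  have h0 := Int.emod_nonneg n hq'.ne'
  have h1 := Int.emod_lt_of_pos n hq'
  refine ⟨⟨(n % q).toNat, by omega⟩, n / q, ?_⟩
  have := Int.emod_add_mul_ediv n q
  simp only [Int.toNat_of_nonneg h0]
  linarith

/-- final example, rational case: for `a = p/q` with `0 < p < q`,
`gcd(p,q) = 1`, the set `K = [−a, 1−a]` cut into the `q` pieces
`K_i = [−(p−i+1)/q, −(p−i)/q]` (here indexed by `i : Fin q`, the piece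
`[(i−p)/q, (i+1−p)/q]`) is an integral self-affine ℤ-tiling set with `q` prototiles for
`B = 2`, and each `2·K_i` is the union of two integer translates of prototiles. -/
theorem example_rational_case
    (p q : ℕ) (hp : 0 < p) (hpq : p < q) (hco : Nat.Coprime p q)
    (Kc : Fin q → Set ℝ)
    (hKc : ∀ i : Fin q, Kc i = Set.Icc (((i : ℝ) - p) / q) (((i : ℝ) + 1 - p) / q)) :
    (⋃ i, Kc i) = Set.Icc (-((p : ℝ) / q)) (1 - (p : ℝ) / q) ∧
    (∀ i j : Fin q, i ≠ j → volume (Kc i ∩ Kc j) = 0) ∧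
    (∀ i : Fin q, ∃ (ℓ₁ ℓ₂ : ℤ) (j₁ j₂ : Fin q),
      (fun x => (2 : ℝ) * x) '' Kc i = tr ℓ₁ (Kc j₁) ∪ tr ℓ₂ (Kc j₂)) ∧
    (∃ Γ : Fin q → Fin q → Finset ℤ, IsSelfAffineCollection 2 Kc Γ) ∧
    TilesZ Kc := by
  have hq : 0 < q := by omega
  have hq' : (0 : ℝ) < q := by exact_mod_cast hq
  have hK : ∀ i : Fin q, Kc i = gridI p q ((i : ℕ) : ℤ) := by
    intro i
    rw [hKc]
    simp [gridI]
  have htr : ∀ (c : ℤ) (i : Fin q), tr c (Kc i) = gridI p q (((i : ℕ) : ℤ) + c * q) := by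
    intro c i
    rw [hK, tr_gridI hq]
  have hdisj : ∀ i j : Fin q, i ≠ j → volume (Kc i ∩ Kc j) = 0 := by
    intro i j hij
    rw [hK, hK]
    apply null_of_ne hq
    intro h
    apply hij
    ext
    exact_mod_cast h
  refine ⟨?_, hdisj, ?_, ?_, hdisj, ?_, ?_⟩
  · ext x
    simp only [Set.mem_iUnion, hK, mem_gridI hq, Set.mem_Icc]
    rw [← neg_div, one_sub_div hq'.ne', div_le_iff₀ hq', le_div_iff₀ hq']
    constructor
    · rintro ⟨i, h1, h2⟩
      have h3 : (((i : ℕ) : ℤ) : ℝ) + 1 ≤ q := by exact_mod_cast i.2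
      have h4 : (0 : ℝ) ≤ (((i : ℕ) : ℤ) : ℝ) := by positivity
      constructor <;> linarith
    · rintro ⟨h1, h2⟩
      have h0 : 0 ≤ x * q + p := by linarith
      rcases lt_or_ge (x * q + p) q with h | h
      · refine ⟨⟨⌊x * q + p⌋₊, (Nat.floor_lt h0).2 h⟩, ?_, ?_⟩
        · simpa using Nat.floor_le h0
        · simpa using (Nat.lt_floor_add_one (x * q + p)).le
      · refine ⟨⟨q - 1, by omega⟩, ?_, ?_⟩
        · simp only [Nat.cast_pred hq, Int.cast_sub, Int.cast_natCast, Int.cast_one]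
          linarith
        · simp only [Nat.cast_pred hq, Int.cast_sub, Int.cast_natCast, Int.cast_one]
          linarith
  · intro i
    obtain ⟨j₁, c₁, e₁⟩ := idx_exists hq (2 * ((i : ℕ) : ℤ) - p)
    obtain ⟨j₂, c₂, e₂⟩ := idx_exists hq (2 * ((i : ℕ) : ℤ) - p + 1)
    refine ⟨c₁, c₂, j₁, j₂, ?_⟩
    rw [htr, htr, e₁, e₂, hK, double_gridI hq]
  · classical
    let Γ : Fin q → Fin q → Finset ℤ := fun i j =>
      (({2 * ((i : ℕ) : ℤ) - p, 2 * ((i : ℕ) : ℤ) - p + 1} : Finset ℤ).image (· / (q : ℤ))).filter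
        (fun γ => ((j : ℕ) : ℤ) + γ * q = 2 * ((i : ℕ) : ℤ) - p ∨
          ((j : ℕ) : ℤ) + γ * q = 2 * ((i : ℕ) : ℤ) - p + 1)
    have hΓ : ∀ i j γ, γ ∈ Γ i j ↔ (((j : ℕ) : ℤ) + γ * q = 2 * ((i : ℕ) : ℤ) - p ∨
          ((j : ℕ) : ℤ) + γ * q = 2 * ((i : ℕ) : ℤ) - p + 1) := by
      intro i j γ
      simp only [Γ, Finset.mem_filter, and_iff_right_iff_imp]
      have hj : ((j : ℕ) : ℤ) < q := by exact_mod_cast j.2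
      have e : (((j : ℕ) : ℤ) + γ * q) / q = γ := by
        rw [Int.add_mul_ediv_right _ _ (by omega), Int.ediv_eq_zero_of_lt (by omega) hj, zero_add]
      intro h
      rw [Finset.mem_image]
      refine ⟨((j : ℕ) : ℤ) + γ * q, ?_, e⟩
      simpa using h
    refine ⟨Γ, ?_, ?_, ?_⟩
    · intro i
      rw [hKc]
      exact isCompact_Icc
    · intro i
      suffices hs : (fun x => ((2 : ℤ) : ℝ) * x) '' Kc i = ⋃ j, ⋃ γ ∈ Γ i j, tr γ (Kc j) by
        rw [hs]
        exact Filter.EventuallyEq.rfl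
      have h2 : ((2 : ℤ) : ℝ) = 2 := by norm_num
      rw [h2, hK, double_gridI hq]
      ext x
      simp only [Set.mem_iUnion, htr, hΓ, Set.mem_union, exists_prop]
      constructor
      · rintro (h | h)
        · obtain ⟨j, c, e⟩ := idx_exists hq (2 * ((i : ℕ) : ℤ) - p)
          exact ⟨j, c, Or.inl e, by rwa [e]⟩
        · obtain ⟨j, c, e⟩ := idx_exists hq (2 * ((i : ℕ) : ℤ) - p + 1)
          exact ⟨j, c, Or.inr e, by rwa [e]⟩
      · rintro ⟨j, c, e | e, h⟩
        · left; rwa [e] at h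
        · right; rwa [e] at h
    · intro k i j β _ γ _ h
      rw [htr, htr]
      exact null_of_ne hq _ _ (idx_ne i j β γ h)
  · intro ℓ₁ ℓ₂ h
    have hU : ∀ c : ℤ, tr c (⋃ i, Kc i) = ⋃ i, tr c (Kc i) := fun c => Set.image_iUnion
    rw [hU, hU, Set.iUnion_inter_iUnion, measure_iUnion_null_iff]
    intro i
    rw [measure_iUnion_null_iff]
    intro j
    rw [htr, htr]
    exact null_of_ne hq _ _ (idx_ne _ _ _ _ (Or.inr h))
  · have hall : (⋃ ℓ : ℤ, tr ℓ (⋃ i, Kc i)) = Set.univ := by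
      rw [Set.eq_univ_iff_forall]
      intro x
      have hU : ∀ c : ℤ, tr c (⋃ i, Kc i) = ⋃ i, tr c (Kc i) := fun c => Set.image_iUnion
      simp only [hU, Set.mem_iUnion, htr]
      obtain ⟨j, c, e⟩ := idx_exists hq ⌊x * q + p⌋
      refine ⟨c, j, ?_⟩
      rw [e, mem_gridI hq]
      exact ⟨Int.floor_le _, (Int.lt_floor_add_one _).le⟩
    rw [hall]
    simp

end ISAMT1
end

section
/- (Final example, irrational case) Let a ∈ (0,1) be irrational and K = [−a, 1−a] ⊆ ℝ. Then K is not an integral self-affine multi-tile associated with B = 2: there is no M ≥ 1 and no collection of compact sets K_1,…,K_M of positive Lebesgue measure with K = ⋃_{i=1}^M K_i (the K_i essentially disjoint) forming an integral self-affine collection associated with B = 2. Combined with the rational case, for a ∈ (0,1) the set K = [−a, 1−a] is an integral self-affine multi-tile associated with B = 2 if and only if a ∈ ℚ. -/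
open MeasureTheory Pointwise

namespace ISAMT1

/-- `K = [−a, 1−a]` is an integral self-affine multi-tile associated with `B = 2`:
it admits a decomposition into finitely many essentially disjoint compact prototiles of
positive measure forming an integral self-affine collection for `B = 2` which ℤ-tiles `ℝ`. -/
def IsSelfAffineMultiTile (a : ℝ) : Prop :=
  ∃ (M : ℕ) (Kc : Fin M → Set ℝ) (Γ : Fin M → Fin M → Finset ℤ),
    1 ≤ M ∧ (∀ i, 0 < volume (Kc i)) ∧
    IsSelfAffineCollection 2 Kc Γ ∧ TilesZ Kc ∧
    Set.Icc (-a) (1 - a) =ᵐ[volume] ⋃ i, Kc i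

theorem mem_tr {c : ℤ} {E : Set ℝ} {x : ℝ} : x ∈ tr c E ↔ x - c ∈ E := by
  unfold tr
  constructor
  · rintro ⟨y, hy, rfl⟩
    simpa using hy
  · intro h
    exact ⟨x - c, h, by ring⟩

theorem ae_add {P : ℝ → Prop} (h : ∀ᵐ x : ℝ, P x) (c : ℝ) : ∀ᵐ x : ℝ, P (x + c) :=
  (measurePreserving_add_right volume c).quasiMeasurePreserving.ae h

theorem ae_half {P : ℝ → Prop} (h : ∀ᵐ x : ℝ, P x) : ∀ᵐ x : ℝ, P (x / 2) := by
  have hq : Measure.QuasiMeasurePreserving (fun x : ℝ => x / 2) volume volume := by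
    refine ⟨by fun_prop, ?_⟩
    have : (fun x : ℝ => x / 2) = fun x => x * (1 / 2 : ℝ) := by
      funext x; ring
    rw [this, Real.map_volume_mul_right (by norm_num)]
    exact Measure.smul_absolutelyContinuous
  exact hq.ae h

theorem ae_of_null {A B : Set ℝ} (h : volume (A ∩ B) = 0) : ∀ᵐ x : ℝ, ¬ (x ∈ A ∧ x ∈ B) := by
  rw [ae_iff]
  simpa using h

/-- Each prototile lies (essentially) on one side of `θ`. -/
def Cut {M : ℕ} (K : Fin M → Set ℝ) (θ : ℝ) : Prop :=
  ∀ j, (∀ᵐ x : ℝ, x ∈ K j → θ ≤ x) ∨ (∀ᵐ x : ℝ, x ∈ K j → x ≤ θ)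

section irr

variable {M : ℕ} {K : Fin M → Set ℝ} {Γ : Fin M → Fin M → Finset ℤ} {a : ℝ}

theorem dichotomy (hS : IsSelfAffineCollection 2 K Γ) (hT : TilesZ K)
    (hK : Set.Icc (-a) (1 - a) =ᵐ[volume] ⋃ i, K i) (γ : ℤ) (j : Fin M) :
    (∀ᵐ x : ℝ, x ∈ K j → ¬ (-2 * a ≤ x + γ ∧ x + γ ≤ 2 - 2 * a)) ∨
    ∃ i, ∀ᵐ x : ℝ, x ∈ K j → (x + γ) / 2 ∈ K i := by
  have H1 : ∀ᵐ x : ℝ, x ∈ Set.Icc (-a) (1 - a) ↔ x ∈ ⋃ i, K i := hK.mem_iff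
  have H2 : ∀ i, ∀ᵐ x : ℝ, x / 2 ∈ K i ↔ ∃ j, ∃ γ ∈ Γ i j, x - (γ : ℤ) ∈ K j := by
    intro i
    filter_upwards [(hS.selfaffine i).mem_iff] with x hx
    have e : x ∈ (fun x => ((2 : ℤ) : ℝ) * x) '' K i ↔ x / 2 ∈ K i := by
      constructor
      · rintro ⟨y, hy, rfl⟩
        simpa using hy
      · intro h
        exact ⟨x / 2, h, by push_cast; ring⟩
    rw [← e, hx]
    simp [mem_tr]
  by_cases hex : ∃ i, γ ∈ Γ i j
  · right
    obtain ⟨i, hi⟩ := hex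
    refine ⟨i, ?_⟩
    filter_upwards [ae_add (H2 i) γ] with x hx hxj
    rw [hx]
    exact ⟨j, γ, hi, by simpa using hxj⟩
  · left
    have H2' := ae_add (ae_all_iff.2 H2) (γ : ℝ)
    have H1' := ae_add (ae_half H1) (γ : ℝ)
    have H3 : ∀ᵐ x : ℝ, ∀ j', j ≠ j' → ¬ (x ∈ K j ∧ x ∈ K j') := by
      rw [ae_all_iff]
      intro j'
      by_cases h : j = j'
      · simp [h]
      · filter_upwards [ae_of_null (hT.1 j j' h)] with x hx _
        exact hx
    have H4 : ∀ᵐ x : ℝ, ∀ l : ℤ, γ ≠ l → ¬ (x ∈ tr γ (⋃ i, K i) ∧ x ∈ tr l (⋃ i, K i)) := by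
      rw [ae_all_iff]
      intro l
      by_cases h : γ = l
      · simp [h]
      · filter_upwards [ae_of_null (hT.2.1 γ l h)] with x hx _
        exact hx
    filter_upwards [H2', H1', H3, ae_add H4 γ] with x h2 h1 h3 h4 hxj hxI
    have : (x + γ) / 2 ∈ Set.Icc (-a) (1 - a) := ⟨by linarith [hxI.1], by linarith [hxI.2]⟩
    rw [h1] at this
    obtain ⟨i, hi⟩ := Set.mem_iUnion.1 this
    obtain ⟨j', γ', hγ', hx'⟩ := (h2 i).1 hi
    by_cases hg : γ = γ'
    · subst hg
      by_cases hj : j = j'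
      · subst hj
        exact hex ⟨i, hγ'⟩
      · exact h3 j' hj ⟨hxj, by simpa using hx'⟩
    · refine h4 γ' hg ⟨?_, ?_⟩
      · rw [mem_tr]
        exact Set.mem_iUnion.2 ⟨j, by simpa using hxj⟩
      · rw [mem_tr]
        exact Set.mem_iUnion.2 ⟨j', hx'⟩

theorem sub_K (hK : Set.Icc (-a) (1 - a) =ᵐ[volume] ⋃ i, K i) (j : Fin M) :
    ∀ᵐ x : ℝ, x ∈ K j → (-a ≤ x ∧ x ≤ 1 - a) := by
  filter_upwards [hK.mem_iff] with x hx hxj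
  exact hx.2 (Set.mem_iUnion.2 ⟨j, hxj⟩)

theorem cut_start (hS : IsSelfAffineCollection 2 K Γ) (hT : TilesZ K) (ha : 0 < a)
    (hK : Set.Icc (-a) (1 - a) =ᵐ[volume] ⋃ i, K i) : Cut K (1 - 2 * a) := by
  intro j
  rcases dichotomy hS hT hK 1 j with h | ⟨i, h⟩
  · left
    filter_upwards [h, sub_K hK j] with x hx hx' hxj
    by_contra hc
    push Not at hc
    obtain ⟨h1, h2⟩ := hx' hxj
    exact hx hxj ⟨by push_cast; linarith, by push_cast; linarith⟩
  · right
    filter_upwards [h, ae_add (ae_half (sub_K hK i)) ((1 : ℤ) : ℝ)] with x hx hx' hxj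
    have := (hx' (hx hxj)).2
    push_cast at this
    linarith

theorem cut_step (hS : IsSelfAffineCollection 2 K Γ) (hT : TilesZ K)
    (hK : Set.Icc (-a) (1 - a) =ᵐ[volume] ⋃ i, K i) {θ θ' : ℝ} (γ : ℤ)
    (h1 : -a < θ) (h2 : θ < 1 - a) (he : θ' = 2 * θ - γ) (hc : Cut K θ) : Cut K θ' := by
  intro j
  rcases dichotomy hS hT hK γ j with h | ⟨i, h⟩
  · by_cases hg : -2 * a ≤ γ - a
    · left
      filter_upwards [h, sub_K hK j] with x hx hx' hxj
      by_contra hlt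
      push Not at hlt
      obtain ⟨h3, h4⟩ := hx' hxj
      exact hx hxj ⟨by linarith, by linarith⟩
    · right
      push Not at hg
      filter_upwards [h, sub_K hK j] with x hx hx' hxj
      by_contra hlt
      push Not at hlt
      obtain ⟨h3, h4⟩ := hx' hxj
      exact hx hxj ⟨by linarith, by linarith⟩
  · rcases hc i with hi | hi
    · left
      filter_upwards [h, ae_add (ae_half hi) (γ : ℝ)] with x hx hx' hxj
      have := hx' (hx hxj)
      linarith
    · right
      filter_upwards [h, ae_add (ae_half hi) (γ : ℝ)] with x hx hx' hxj
      have := hx' (hx hxj)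
      linarith

open Classical in
/-- Indices of prototiles with positive measure to the left of `θ`. -/
noncomputable def leftSet {M : ℕ} (K : Fin M → Set ℝ) (θ : ℝ) : Finset (Fin M) :=
  Finset.univ.filter (fun j => ¬ ∀ᵐ x : ℝ, x ∈ K j → θ ≤ x)

theorem leftSet_ne (hK : Set.Icc (-a) (1 - a) =ᵐ[volume] ⋃ i, K i) {θ θ' : ℝ}
    (h1 : -a < θ) (h2 : θ' < 1 - a) (hlt : θ < θ') (hc : Cut K θ) :
    leftSet K θ ≠ leftSet K θ' := by
  intro heq
  have : ∃ j, ¬ ∀ᵐ x : ℝ, ¬ (x ∈ K j ∧ θ < x ∧ x < θ') := by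
    by_contra hcon
    push Not at hcon
    have h0 : ∀ᵐ x : ℝ, ¬ (x ∈ Set.Ioo θ θ') := by
      filter_upwards [hK.mem_iff, ae_all_iff.2 hcon] with x hx hx2 hx3
      obtain ⟨i, hi⟩ := Set.mem_iUnion.1 (hx.1 ⟨by linarith [hx3.1], by linarith [hx3.2]⟩)
      have := hx2 i hi hx3.1
      linarith [hx3.2]
    rw [ae_iff] at h0
    simp only [not_not, Set.ofPred_mem_eq, Real.volume_Ioo, ENNReal.ofReal_eq_zero] at h0
    linarith
  obtain ⟨j, hj⟩ := this
  have hA : ∀ᵐ x : ℝ, x ∈ K j → θ ≤ x := by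
    rcases hc j with h | h
    · exact h
    · exfalso
      apply hj
      filter_upwards [h] with x hx hx2
      linarith [hx hx2.1, hx2.2.1]
  have hB : ¬ ∀ᵐ x : ℝ, x ∈ K j → θ' ≤ x := by
    intro h
    apply hj
    filter_upwards [h] with x hx hx2
    linarith [hx hx2.1, hx2.2.2]
  have m1 : j ∉ leftSet K θ := by
    simp only [leftSet, Finset.mem_filter, not_and, not_not]
    exact fun _ => hA
  have m2 : j ∈ leftSet K θ' := by
    simp only [leftSet, Finset.mem_filter]
    exact ⟨Finset.mem_univ _, hB⟩
  exact m1 (heq ▸ m2)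

end irr

theorem irrational_case (a : ℝ) (ha : 0 < a) (ha1 : a < 1) (hirr : Irrational a) :
    ¬ IsSelfAffineMultiTile a := by
  rintro ⟨M, K, Γ, -, -, hS, hT, hK⟩
  -- rational combinations cannot be integers
  have key : ∀ m n l : ℤ, m ≠ 0 → (m : ℝ) * a + n ≠ l := by
    intro m n l hm h
    apply hirr
    refine ⟨((l - n : ℤ) : ℚ) / (m : ℚ), ?_⟩
    have : (m : ℝ) ≠ 0 := by exact_mod_cast hm
    push_cast
    field_simp
    linarith
  let θ : ℕ → ℝ := fun k => -a + Int.fract (2 ^ k * (1 - 2 * a) + a)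
  have hθ : ∀ k, θ k = 2 ^ k * (1 - 2 * a) - ⌊(2 : ℝ) ^ k * (1 - 2 * a) + a⌋ := by
    intro k
    simp only [θ, Int.fract]
    ring
  have hlt : ∀ k, θ k < 1 - a := by
    intro k
    have := Int.fract_lt_one ((2 : ℝ) ^ k * (1 - 2 * a) + a)
    simp only [θ]
    linarith
  have hgt : ∀ k, -a < θ k := by
    intro k
    have h0 := Int.fract_nonneg ((2 : ℝ) ^ k * (1 - 2 * a) + a)
    have hne : θ k ≠ -a := by
      rw [hθ]
      intro h
      refine key (1 - 2 ^ (k + 1)) (2 ^ k) ⌊(2 : ℝ) ^ k * (1 - 2 * a) + a⌋ ?_ ?_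
      · have : (2 : ℤ) ^ (k + 1) = 2 * 2 ^ k := by ring
        omega
      · push_cast
        rw [pow_succ]
        linarith
    rcases lt_or_eq_of_le (show -a ≤ θ k by simp only [θ]; linarith) with h | h
    · exact h
    · exact absurd h.symm hne
  have hcut : ∀ k, Cut K (θ k) := by
    intro k
    induction k with
    | zero =>
      have : θ 0 = 1 - 2 * a := by
        simp only [θ]
        rw [Int.fract_eq_self.2 ⟨by norm_num; linarith, by norm_num; linarith⟩]
        ring
      rw [this]
      exact cut_start hS hT ha hK
    | succ k ih =>
      refine cut_step hS hT hK (⌊(2 : ℝ) ^ (k + 1) * (1 - 2 * a) + a⌋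
        - 2 * ⌊(2 : ℝ) ^ k * (1 - 2 * a) + a⌋) (hgt k) (hlt k) ?_ ih
      rw [hθ, hθ]
      push_cast
      ring
  have hinj : ∀ k l, k < l → θ k ≠ θ l := by
    intro k l hkl h
    rw [hθ, hθ] at h
    refine key (2 * (2 ^ l - 2 ^ k)) (2 ^ k - 2 ^ l) (⌊(2 : ℝ) ^ k * (1 - 2 * a) + a⌋
      - ⌊(2 : ℝ) ^ l * (1 - 2 * a) + a⌋) ?_ ?_
    · have : (2 : ℤ) ^ k < 2 ^ l := pow_lt_pow_right₀ (by norm_num) hkl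
      omega
    · push_cast
      linarith
  have hne : ∀ k l, k < l → leftSet K (θ k) ≠ leftSet K (θ l) := by
    intro k l hkl
    rcases lt_or_gt_of_ne (hinj k l hkl) with h | h
    · exact leftSet_ne hK (hgt k) (hlt l) h (hcut k)
    · exact (leftSet_ne hK (hgt l) (hlt k) h (hcut l)).symm
  refine not_injective_infinite_finite (fun k => leftSet K (θ k)) ?_
  intro k l h
  rcases lt_trichotomy k l with h' | h' | h'
  · exact absurd h (hne k l h')
  · exact h'
  · exact absurd h.symm (hne l k h')

/-- The `m`-th interval of the grid of mesh `1/q`. -/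
def cell (q : ℕ) (m : ℤ) : Set ℝ := {x | (m : ℝ) ≤ q * x ∧ q * x ≤ m + 1}

theorem cell_eq {q : ℕ} (hq : 0 < q) (m : ℤ) :
    cell q m = Set.Icc ((m : ℝ) / q) (((m : ℝ) + 1) / q) := by
  have : (0 : ℝ) < q := by exact_mod_cast hq
  ext x
  simp only [cell, Set.mem_ofPred_eq, Set.mem_Icc, div_le_iff₀ this, le_div_iff₀ this, mul_comm]

theorem tr_cell (q : ℕ) (γ m : ℤ) : tr γ (cell q m) = cell q (m + q * γ) := by
  ext x
  rw [mem_tr]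
  simp only [cell, Set.mem_ofPred_eq]
  push_cast
  constructor
  · rintro ⟨h1, h2⟩
    constructor <;> linarith
  · rintro ⟨h1, h2⟩
    constructor <;> linarith

theorem cell_inter {q : ℕ} (hq : 0 < q) {m n : ℤ} (h : m ≠ n) :
    volume (cell q m ∩ cell q n) = 0 := by
  wlog hlt : m < n generalizing m n
  · rw [Set.inter_comm]
    exact this h.symm (lt_of_le_of_ne (not_lt.1 hlt) h.symm)
  have h0 : (0 : ℝ) < q := by exact_mod_cast hq
  refine measure_mono_null (t := {(n : ℝ) / q}) ?_ (by simp)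
  rintro x ⟨⟨_, h2⟩, ⟨h3, _⟩⟩
  have h4 : ((m : ℝ) + 1) ≤ n := by exact_mod_cast hlt
  simp only [Set.mem_singleton_iff]
  rw [eq_div_iff h0.ne']
  linarith

theorem rational_case (a : ℝ) (ha : 0 < a) (ha1 : a < 1) (r : ℚ) (hr : (r : ℝ) = a) :
    IsSelfAffineMultiTile a := by
  obtain ⟨q, p, hq, hp⟩ : ∃ (q : ℕ) (p : ℤ), 0 < q ∧ (q : ℝ) * a = p := by
    refine ⟨r.den, r.num, r.den_pos, ?_⟩
    rw [← hr]
    exact_mod_cast Rat.den_mul_eq_num r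
  have hq0 : (0 : ℝ) < q := by exact_mod_cast hq
  have hqz : (0 : ℤ) < q := by exact_mod_cast hq
  have hp0 : 0 < p := by
    have : (0 : ℝ) < p := by rw [← hp]; positivity
    exact_mod_cast this
  have hpq : p < q := by
    have : (p : ℝ) < q := by rw [← hp]; nlinarith
    exact_mod_cast this
  let K : Fin q → Set ℝ := fun i => cell q ((i : ℤ) - p)
  have repr_n : ∀ n : ℤ, ∃ (j : Fin q) (γ : ℤ), n = (j : ℤ) - p + q * γ := by
    intro n
    have h1 := Int.emod_nonneg (n + p) hqz.ne'
    have h2 := Int.emod_lt_of_pos (n + p) hqz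
    refine ⟨⟨((n + p) % q).toNat, by omega⟩, (n + p) / q, ?_⟩
    have h3 := Int.emod_add_mul_ediv (n + p) q
    have h4 : (((n + p) % q).toNat : ℤ) = (n + p) % q := Int.toNat_of_nonneg h1
    simp only [h4]
    linarith
  have uniq : ∀ (i j : Fin q) (β γ : ℤ),
      (i : ℤ) - p + q * β = (j : ℤ) - p + q * γ → i = j ∧ β = γ := by
    intro i j β γ h
    have hi : ((i : ℕ) : ℤ) < q := by exact_mod_cast i.2
    have hj : ((j : ℕ) : ℤ) < q := by exact_mod_cast j.2
    have e : β = γ := by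
      rcases lt_trichotomy β γ with h' | h' | h'
      · nlinarith
      · exact h'
      · nlinarith
    subst e
    refine ⟨?_, rfl⟩
    apply Fin.ext
    omega
  let Γ : Fin q → Fin q → Finset ℤ := fun i j => (Finset.Icc (-3) 3).filter (fun γ =>
    (j : ℤ) - p + q * γ = 2 * ((i : ℤ) - p) ∨ (j : ℤ) - p + q * γ = 2 * ((i : ℤ) - p) + 1)
  have hΓ : ∀ i j γ, γ ∈ Γ i j ↔ ((j : ℤ) - p + q * γ = 2 * ((i : ℤ) - p) ∨
      (j : ℤ) - p + q * γ = 2 * ((i : ℤ) - p) + 1) := by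
    intro i j γ
    simp only [Γ, Finset.mem_filter, Finset.mem_Icc, and_iff_right_iff_imp]
    intro h
    have hi : ((i : ℕ) : ℤ) < q := by exact_mod_cast i.2
    have hj : ((j : ℕ) : ℤ) < q := by exact_mod_cast j.2
    constructor
    · by_contra hc
      have : γ ≤ -4 := by omega
      have : (q : ℤ) * γ ≤ q * (-4) := by nlinarith
      omega
    · by_contra hc
      have : γ ≥ 4 := by omega
      have : (q : ℤ) * γ ≥ q * 4 := by nlinarith
      omega
  have hU : (⋃ i, K i) = Set.Icc (-a) (1 - a) := by
    ext x
    simp only [Set.mem_iUnion, Set.mem_Icc, K, cell, Set.mem_ofPred_eq]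
    constructor
    · rintro ⟨i, h1, h2⟩
      have hi : ((i : ℕ) : ℝ) + 1 ≤ q := by exact_mod_cast i.2
      have hi0 : (0 : ℝ) ≤ ((i : ℕ) : ℝ) := by positivity
      push_cast at h1 h2
      constructor
      · by_contra hc
        push Not at hc
        nlinarith
      · by_contra hc
        push Not at hc
        nlinarith
    · rintro ⟨h1, h2⟩
      have g1 : 0 ≤ (q : ℝ) * x + p := by rw [← hp]; nlinarith
      have g2 : (q : ℝ) * x + p ≤ q := by rw [← hp]; nlinarith
      rcases eq_or_lt_of_le g2 with g3 | g3
      · refine ⟨⟨q - 1, by omega⟩, ?_⟩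
        have : ((q - 1 : ℕ) : ℝ) = q - 1 := by
          rw [Nat.cast_sub (by omega)]; simp
        push_cast
        rw [this]
        constructor <;> linarith
      · have f1 := Nat.floor_le g1
        have f2 := Nat.lt_floor_add_one ((q : ℝ) * x + p)
        refine ⟨⟨⌊(q : ℝ) * x + p⌋₊, (Nat.floor_lt g1).2 g3⟩, ?_⟩
        push_cast
        constructor <;> linarith
  refine ⟨q, K, Γ, hq, ?_, ⟨?_, ?_, ?_⟩, ⟨?_, ?_, ?_⟩, ?_⟩
  · intro i
    simp only [K]
    rw [cell_eq hq, Real.volume_Icc, ENNReal.ofReal_pos, ← sub_div]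
    apply div_pos _ hq0
    linarith
  · intro i
    simp only [K]
    rw [cell_eq hq]
    exact isCompact_Icc
  · intro i
    have : (fun x => ((2 : ℤ) : ℝ) * x) '' K i = ⋃ j, ⋃ γ ∈ Γ i j, tr γ (K j) := by
      ext x
      simp only [K, tr_cell, Set.mem_iUnion, exists_prop, hΓ]
      constructor
      · rintro ⟨y, ⟨h1, h2⟩, rfl⟩
        rcases le_total (2 * (q : ℝ) * y) (2 * (((i : ℤ) - p : ℤ) : ℝ) + 1) with h | h
        · obtain ⟨j, γ, hj⟩ := repr_n (2 * ((i : ℤ) - p))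
          refine ⟨j, γ, Or.inl hj.symm, ?_⟩
          rw [← hj]
          simp only [cell, Set.mem_ofPred_eq]
          push_cast at *
          constructor <;> linarith
        · obtain ⟨j, γ, hj⟩ := repr_n (2 * ((i : ℤ) - p) + 1)
          refine ⟨j, γ, Or.inr hj.symm, ?_⟩
          rw [← hj]
          simp only [cell, Set.mem_ofPred_eq]
          push_cast at *
          constructor <;> linarith
      · rintro ⟨j, γ, h | h, hx⟩
        · rw [h] at hx
          obtain ⟨h1, h2⟩ := hx
          refine ⟨x / 2, ⟨?_, ?_⟩, by push_cast; ring⟩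
          · push_cast at *
            linarith
          · push_cast at *
            linarith
        · rw [h] at hx
          obtain ⟨h1, h2⟩ := hx
          refine ⟨x / 2, ⟨?_, ?_⟩, by push_cast; ring⟩
          · push_cast at *
            linarith
          · push_cast at *
            linarith
    rw [this]
    exact Filter.EventuallyEq.rfl
  · intro k i j β _ γ _ hne
    simp only [K, tr_cell]
    apply cell_inter hq
    intro h
    obtain ⟨h1, h2⟩ := uniq i j β γ h
    rcases hne with h' | h'
    · exact h' h1
    · exact h' h2
  · intro i j hij
    apply cell_inter hq
    intro h
    exact hij (uniq i j 0 0 (by simpa using h)).1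
  · intro l₁ l₂ hl
    rw [hU]
    wlog hlt : l₁ < l₂ generalizing l₁ l₂
    · rw [Set.inter_comm]
      exact this l₂ l₁ hl.symm (lt_of_le_of_ne (not_lt.1 hlt) hl.symm)
    refine measure_mono_null (t := {(l₂ : ℝ) - a}) ?_ (by simp)
    rintro x ⟨h1, h2⟩
    rw [mem_tr] at h1 h2
    have h4 : ((l₁ : ℝ) + 1) ≤ l₂ := by exact_mod_cast hlt
    simp only [Set.mem_singleton_iff]
    linarith [h1.2, h2.1]
  · rw [hU]
    convert measure_empty (μ := (volume : Measure ℝ))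
    rw [Set.sdiff_eq_empty]
    intro x _
    refine Set.mem_iUnion.2 ⟨⌊x + a⌋, ?_⟩
    rw [mem_tr]
    have f1 := Int.floor_le (x + a)
    have f2 := Int.lt_floor_add_one (x + a)
    constructor <;> linarith
  · rw [hU]
    exact Filter.EventuallyEq.rfl

/-- final example, irrational case: for irrational `a ∈ (0,1)` the set
`K = [−a, 1−a]` is not an integral self-affine multi-tile associated with `B = 2`;
combined with the rational case, for `a ∈ (0,1)` the set `K = [−a, 1−a]` is an integral
self-affine multi-tile associated with `B = 2` if and only if `a` is rational. -/
theorem example_irrational_iff_rational :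
    (∀ a : ℝ, 0 < a → a < 1 → Irrational a → ¬ IsSelfAffineMultiTile a) ∧
    (∀ a : ℝ, 0 < a → a < 1 →
      (IsSelfAffineMultiTile a ↔ ∃ r : ℚ, (r : ℝ) = a)) := by
  refine ⟨irrational_case, fun a ha ha1 => ⟨fun h => ?_, ?_⟩⟩
  · by_contra hn
    refine irrational_case a ha ha1 ?_ h
    rintro ⟨r, hr⟩
    exact hn ⟨r, hr⟩
  · rintro ⟨r, hr⟩
    exact rational_case a ha ha1 r hr

end ISAMT1
end
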